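/- (No-go theorem for internal universes, Theorem 3.1.) Assume an interval type 𝕀 : Type with elements O, 1 : 𝕀 such that O ≠ 1, and cofibrancy data cof : Type → Type with an element cof⊥ : cof Empty. Then there is no internal universe weakly classifying CCHM fibrations: from data U : Type 2, El : Fib U, code : {Γ : Type} → Fib Γ → Γ → U, and Elcode : ∀ {Γ : Type} (Φ : Fib Γ), El[code Φ] = Φ, one can derive False. -/

import Mathlib

namespace Crisp

/-!
Statement 0 (Theorem 3.1, "no-go" theorem for internal universes):
an internal weak classifier for CCHM fibrations is contradictory,
given an interval with two distinct endpoints and cofibrancy data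
containing the empty type.
-/

universe u v

/-- The path functor `Path A = 𝕀 → A`. -/
def Path (𝕀 : Type) (A : Type u) : Type u := 𝕀 → A

/-- Functorial action of `Path` (postcomposition). -/
def Path' (𝕀 : Type) {A : Type u} {B : Type v} (f : A → B) (p : Path 𝕀 A) : Path 𝕀 B :=
  fun i => f (p i)

/-- The extension relation `t ↗ x`: the partial element `t` extends to `x`. -/
def Extends {φ : Type} {A : Type u} (t : φ → A) (x : A) : Prop :=
  ∀ u : φ, t u = x

/-- CCHM composition structure for a path of types `P : 𝕀 → Type`. -/
def CCHM (𝕀 : Type) (O I1 : 𝕀) (cof : Type → Type) (P : 𝕀 → Type) : Type 1 :=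
  (φ : Type) → cof φ → (p : ∀ i : 𝕀, φ → P i) →
    (Σ' a₀ : P O, Extends (p O) a₀) → Σ' a₁ : P I1, Extends (p I1) a₁

/-- CCHM fibration structures for a family `A : Γ → Type`. -/
def isFib (𝕀 : Type) (O I1 : 𝕀) (cof : Type → Type) (Γ : Type u) (A : Γ → Type) :
    Type (max u 1) :=
  (p : Path 𝕀 Γ) → CCHM 𝕀 O I1 cof (fun i => A (p i))

/-- Fibrations over `Γ`: families with a fibration structure. -/
def Fib (𝕀 : Type) (O I1 : 𝕀) (cof : Type → Type) (Γ : Type u) : Type (max u 1) :=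
  Σ A : Γ → Type, isFib 𝕀 O I1 cof Γ A

/-- Re-indexing of a fibration along `γ : Γ' → Γ`. -/
def reindex {𝕀 : Type} {O I1 : 𝕀} {cof : Type → Type} {Γ : Type u} {Γ' : Type v}
    (Φ : Fib 𝕀 O I1 cof Γ) (γ : Γ' → Γ) : Fib 𝕀 O I1 cof Γ' :=
  ⟨fun x => Φ.1 (γ x), fun p => Φ.2 (Path' 𝕀 γ p)⟩

/-!
For each `i : 𝕀` the proposition `O = i`, viewed as a constant family over the point, is a fibration:
composition is the identity. Internally, nothing prevents `code` from being applied to this fibration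
with `i` as a parameter, which produces a path `i ↦ code (eqFib 𝕀 O I1 cof i) ()` in `U`. Composition for `El` along
that path transports `O = O` to `O = I1`, contradicting `O ≠ I1`.
-/

/-- The proposition `O = i` as a fibration over the point. -/
def eqFib (𝕀 : Type) (O I1 : 𝕀) (cof : Type → Type) (i : 𝕀) : Fib 𝕀 O I1 cof Unit :=
  ⟨fun _ => PLift (O = i), fun _ _ _ _ a => ⟨a.1, fun _ => Subsingleton.elim _ _⟩⟩

/-- Theorem 3.1: there is no internal universe weakly classifying CCHM fibrations. -/
theorem no_internal_universe
    (𝕀 : Type) (O I1 : 𝕀) (hOI : (O = I1) → False)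
    (cof : Type → Type) (cofBot : cof Empty)
    (U : Type 2) (El : Fib 𝕀 O I1 cof U)
    (code : {Γ : Type} → Fib 𝕀 O I1 cof Γ → Γ → U)
    (Elcode : ∀ {Γ : Type} (Φ : Fib 𝕀 O I1 cof Γ), reindex El (code Φ) = Φ) :
    False := by
  have h : ∀ i, El.1 (code (eqFib 𝕀 O I1 cof i) ()) = PLift (O = i) := fun i =>
    congrFun (congrArg Sigma.fst (Elcode (eqFib 𝕀 O I1 cof i))) ()
  -- The cofibration `Empty` imposes no constraint, so composition is plain transport.
  have a := El.2 (fun i => code (eqFib 𝕀 O I1 cof i) ()) Empty cofBot (fun _ u => u.elim)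
    ⟨cast (h O).symm ⟨rfl⟩, fun u => u.elim⟩
  exact hOI (cast (h I1) a.1).down

end Crisp
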